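/- Let S = k[X_0,...,X_n] and let N, M be nonzero finite length graded S-modules. In a minimal graded free resolution 0 → L_{n+1} → L_n → ... → L_0 → N → 0, the map L_{n+1} ⊗_S M → L_n ⊗_S M is not injective; equivalently Tor_{n+1}^S(N, M) ≠ 0. -/

import Mathlib

/-!
Background setup (the paper works on projective space `ℙⁿ` over a field `K`):
we encode a coherent sheaf on `ℙⁿ_K` by a module `M` over the homogeneous coordinate
ring `S = K[X₀,…,Xₙ]` (namely `M = Γ_*` of the sheaf), and the intermediate cohomology
module `H^i_*(F) = ⊕_ν H^i(ℙⁿ, F(ν))` (for `i ≥ 1`) by the local cohomology module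
`H^{i+1}_𝔪(M)` at the irrelevant maximal ideal `𝔪 = (X₀,…,Xₙ)`, to which it is
canonically isomorphic.
-/

open CategoryTheory TensorProduct

noncomputable section

/-- The homogeneous coordinate ring `S = K[X₀,…,Xₙ]` of `ℙⁿ`. -/
abbrev PolyS (K : Type) [Field K] (n : ℕ) : Type := MvPolynomial (Fin (n+1)) K

variable (K : Type) [Field K] (n : ℕ)

/-- The irrelevant maximal ideal `𝔪 = (X₀,…,Xₙ)` of `S`. -/
def irrel : Ideal (PolyS K n) := Ideal.span (Set.range MvPolynomial.X)

/-- `H^i_*` of the sheaf on `ℙⁿ` associated to the `S`-module `M`, encoded (for `i ≥ 1`)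
as the local cohomology module `H^{i+1}_𝔪(M)`. -/
def Hstar (i : ℕ) (M : Type) [AddCommGroup M] [Module (PolyS K n) M] :
    ModuleCat (PolyS K n) :=
  (localCohomology (irrel K n) (i+1)).obj (ModuleCat.of (PolyS K n) M)

/-- `M` is (the module of sections `Γ_*` of) an algebraic vector bundle on `ℙⁿ`:
finitely generated, depth `≥ 2` at `𝔪` (i.e. `H⁰_𝔪(M) = H¹_𝔪(M) = 0`, so `M = Γ_*(M̃)`),
and locally free at every prime other than the irrelevant ideal. -/
structure IsBundleModule (M : Type) [AddCommGroup M] [Module (PolyS K n) M] : Prop where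
  finite : Module.Finite (PolyS K n) M
  h0 : Subsingleton ((localCohomology (irrel K n) 0).obj (ModuleCat.of (PolyS K n) M))
  h1 : Subsingleton ((localCohomology (irrel K n) 1).obj (ModuleCat.of (PolyS K n) M))
  locFree : ∀ p : PrimeSpectrum (PolyS K n), p.asIdeal ≠ irrel K n →
    Module.Free (Localization.AtPrime p.asIdeal) (LocalizedModule p.asIdeal.primeCompl M)

/-- `M` represents a vector bundle of rank two on `ℙⁿ`. -/
structure IsRankTwoBundleModule (M : Type) [AddCommGroup M] [Module (PolyS K n) M]
    extends IsBundleModule K n M : Prop where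
  rank2 : ∀ p : PrimeSpectrum (PolyS K n), p.asIdeal ≠ irrel K n →
    Module.rank (Localization.AtPrime p.asIdeal) (LocalizedModule p.asIdeal.primeCompl M) = 2

/-- A finite length module which is moreover supported at the irrelevant ideal: the
(ungraded avatar of the) notion of a *graded* `S`-module of finite length. -/
def IsGradedFiniteLength (N : Type) [AddCommGroup N] [Module (PolyS K n) N] : Prop :=
  IsFiniteLength (PolyS K n) N ∧
    ∃ c : ℕ, (irrel K n) ^ c ≤ Module.annihilator (PolyS K n) N

/-- A minimal graded free resolution `⋯ → L₁ → L₀ → N → 0` of an `S`-module `N`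
(minimality: all differentials have entries in the maximal ideal `𝔪`).
Here `d i : L (i+1) → L i` and `P_k(N)`, the `k`-th syzygy module, is `range (d k)`,
i.e. the image of `f_{k+1} : L_{k+1} → L_k`. -/
structure MinimalResolution (N : Type) [AddCommGroup N] [Module (PolyS K n) N] where
  L : ℕ → Type
  [addCommGroup : ∀ i, AddCommGroup (L i)]
  [module : ∀ i, Module (PolyS K n) (L i)]
  free : ∀ i, Module.Free (PolyS K n) (L i)
  finite : ∀ i, Module.Finite (PolyS K n) (L i)
  d : ∀ i : ℕ, L (i+1) →ₗ[PolyS K n] L i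
  aug : L 0 →ₗ[PolyS K n] N
  aug_surjective : Function.Surjective aug
  exact0 : LinearMap.range (d 0) = LinearMap.ker aug
  exact : ∀ i : ℕ, LinearMap.range (d (i+1)) = LinearMap.ker (d i)
  minimal : ∀ i : ℕ, LinearMap.range (d i) ≤ (irrel K n) • (⊤ : Submodule (PolyS K n) (L i))
  minimal0 : LinearMap.ker aug ≤ (irrel K n) • (⊤ : Submodule (PolyS K n) (L 0))

attribute [instance] MinimalResolution.addCommGroup MinimalResolution.module

section Koszul

variable {R : Type} [CommRing R] {L : ℕ → Type} [∀ i, AddCommGroup (L i)] [∀ i, Module R (L i)]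

/-- Cycles modulo `J`. -/
def cycMod (d : ∀ i : ℕ, L (i+1) →ₗ[R] L i) (J : Ideal R) : ∀ i, Submodule R (L i)
  | 0 => ⊤
  | (i+1) => (J • (⊤ : Submodule R (L i))).comap (d i)

/-- Boundaries modulo `J`. -/
def bdMod (d : ∀ i : ℕ, L (i+1) →ₗ[R] L i) (J : Ideal R) (i : ℕ) : Submodule R (L i) :=
  LinearMap.range (d i) ⊔ J • (⊤ : Submodule R (L i))

theorem mem_bdMod {d : ∀ i : ℕ, L (i+1) →ₗ[R] L i} {J : Ideal R} {i : ℕ} {z : L i} :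
    z ∈ bdMod d J i ↔ ∃ v, ∃ b ∈ J • (⊤ : Submodule R (L i)), d i v + b = z := by
  simp [bdMod, Submodule.mem_sup]

theorem mem_step {F : Type} [AddCommGroup F] [Module R F] {J : Ideal R} {x : R} {z : F} :
    z ∈ (J ⊔ Ideal.span {x}) • (⊤ : Submodule R F) ↔
      ∃ w, ∃ b ∈ J • (⊤ : Submodule R F), z = x • w + b := by
  rw [Submodule.sup_smul, Submodule.ideal_span_singleton_smul, Submodule.mem_sup]
  constructor
  · rintro ⟨b, hb, y, hy, rfl⟩
    obtain ⟨w, -, rfl⟩ := (Submodule.mem_smul_pointwise_iff_exists _ _ _).1 hy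
    exact ⟨w, b, hb, add_comm _ _⟩
  · rintro ⟨w, b, hb, rfl⟩
    exact ⟨b, hb, x • w, Submodule.smul_mem_pointwise_smul _ _ _ trivial, add_comm _ _⟩

variable (d : ∀ i : ℕ, L (i+1) →ₗ[R] L i)
  (hex : ∀ i : ℕ, LinearMap.range (d (i+1)) = LinearMap.ker (d i))
  (x : ℕ → R) (I : ℕ → Ideal R) (hI0 : I 0 = ⊥) (hI : ∀ j, I (j+1) = I j ⊔ Ideal.span {x j})
  (m : ℕ)
  (hreg : ∀ j < m, ∀ i, ∀ w : L i, x j • w ∈ I j • (⊤ : Submodule R (L i)) →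
    w ∈ I j • (⊤ : Submodule R (L i)))

theorem d_smul_top {J : Ideal R} {i : ℕ} {b : L (i+1)}
    (hb : b ∈ J • (⊤ : Submodule R (L (i+1)))) : d i b ∈ J • (⊤ : Submodule R (L i)) :=
  Submodule.smul_top_le_comap_smul_top J (d i) hb

include hex in
theorem d_d (i : ℕ) (v : L (i+2)) : d i (d (i+1) v) = 0 := by
  have : d (i+1) v ∈ LinearMap.ker (d i) := by rw [← hex]; exact ⟨v, rfl⟩
  exact this

include hex hreg in
theorem cyc_of_step {j : ℕ} (hj : j < m) (i : ℕ) (v : L (i+1)) (w b : L i)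
    (hb : b ∈ I j • (⊤ : Submodule R (L i))) (h : d i v = x j • w + b) :
    w ∈ cycMod d (I j) i := by
  cases i with
  | zero => trivial
  | succ i =>
    refine hreg j hj i _ ?_
    have h0 := d_d d hex i v
    rw [h, map_add, map_smul] at h0
    rw [eq_neg_of_add_eq_zero_left h0]
    exact neg_mem (d_smul_top d hb)

include hex hreg hI0 hI in
theorem cyc_vanish (j : ℕ) (hj : j ≤ m) : ∀ i, j ≤ i →
    cycMod d (I j) (i+1) ≤ bdMod d (I j) (i+1) := by
  induction j with
  | zero =>
    intro i _ z hz
    rw [hI0] at hz ⊢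
    simp only [cycMod, Submodule.bot_smul, Submodule.comap_bot] at hz
    rw [← hex] at hz
    exact Submodule.mem_sup_left hz
  | succ j ih =>
    intro i hi z hz
    obtain ⟨i, rfl⟩ : ∃ k, i = k + 1 := ⟨i - 1, by omega⟩
    have hz' : d (i+1) z ∈ I (j+1) • (⊤ : Submodule R (L (i+1))) := hz
    rw [hI, mem_step] at hz'
    obtain ⟨w, b, hb, h⟩ := hz'
    have hw := ih (by omega) i (by omega) (cyc_of_step d hex x I m hreg (by omega) _ _ _ _ hb h)
    obtain ⟨v, b', hb', rfl⟩ := mem_bdMod.1 hw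
    have h2 : z - x j • v ∈ cycMod d (I j) (i+2) := by
      change d (i+1) (z - x j • v) ∈ I j • (⊤ : Submodule R (L (i+1)))
      have : d (i+1) (z - x j • v) = x j • b' + b := by
        rw [map_sub, map_smul, h, smul_add]; abel
      rw [this]
      exact add_mem (Submodule.smul_mem _ _ hb') hb
    obtain ⟨u, b2, hb2, h3⟩ := mem_bdMod.1 (ih (by omega) (i+1) (by omega) h2)
    refine mem_bdMod.2 ⟨u, x j • v + b2, ?_, ?_⟩
    · rw [hI, mem_step]; exact ⟨v, b2, hb2, rfl⟩
    · rw [add_left_comm, h3]; abel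

include hex hreg hI0 hI in
theorem cyc_nonvanish (c : ℕ) (hnil : ∀ i < m, ∀ z : L 0, x i ^ c • z ∈ LinearMap.range (d 0))
    (hne : LinearMap.range (d 0) ≠ ⊤) (j : ℕ) (hj : j ≤ m) :
    (∃ z ∈ cycMod d (I j) j, z ∉ bdMod d (I j) j) ∧
    (∀ i < m, ∀ z ∈ cycMod d (I j) j, x i ^ c • z ∈ bdMod d (I j) j) := by
  induction j with
  | zero =>
    simp only [cycMod, bdMod, hI0, Submodule.bot_smul, sup_bot_eq]
    refine ⟨?_, fun i hi z _ => hnil i hi z⟩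
    by_contra! h
    exact hne (eq_top_iff.2 fun z _ => h z trivial)
  | succ j ih =>
    obtain ⟨⟨z, hz, hzb⟩, hn⟩ := ih (by omega)
    constructor
    · -- find the last nonvanishing power
      classical
      have hE : ∃ e, x j ^ e • z ∈ bdMod d (I j) j := ⟨c, hn j (by omega) z hz⟩
      obtain ⟨e, he⟩ : ∃ e, Nat.find hE = e + 1 := by
        refine Nat.exists_eq_succ_of_ne_zero fun h0 => hzb ?_
        have := Nat.find_spec hE
        rw [h0] at this
        simpa using this
      have h1 : x j ^ e • z ∉ bdMod d (I j) j := Nat.find_min hE (by omega)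
      have h2 : x j ^ (e+1) • z ∈ bdMod d (I j) j := he ▸ Nat.find_spec hE
      rw [pow_succ', mul_smul] at h2
      generalize x j ^ e • z = w at h1 h2
      obtain ⟨v, b, hb, h⟩ := mem_bdMod.1 h2
      refine ⟨v, ?_, fun hv => h1 ?_⟩
      · change d j v ∈ I (j+1) • (⊤ : Submodule R (L j))
        rw [hI, mem_step]
        exact ⟨w, -b, neg_mem hb, by rw [← h]; abel⟩
      · obtain ⟨u, t, ht, rfl⟩ := mem_bdMod.1 hv
        rw [hI, mem_step] at ht
        obtain ⟨t, b2, hb2, rfl⟩ := ht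
        have h3 : w - d j t ∈ I j • (⊤ : Submodule R (L j)) := by
          refine hreg j (by omega) j _ ?_
          have : x j • (w - d j t) = d j b2 + b := by
            rw [smul_sub, ← h, map_add, d_d d hex, map_add, map_smul]; abel
          rw [this]
          exact add_mem (d_smul_top d hb2) hb
        exact mem_bdMod.2 ⟨t, _, h3, by abel⟩
    · intro i hi v hv
      have hv' : d j v ∈ I (j+1) • (⊤ : Submodule R (L j)) := hv
      rw [hI, mem_step] at hv'
      obtain ⟨w, b, hb, h⟩ := hv'
      have hw := hn i hi w (cyc_of_step d hex x I m hreg (by omega) _ _ _ _ hb h)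
      obtain ⟨u, b', hb', h'⟩ := mem_bdMod.1 hw
      have h2 : x i ^ c • v - x j • u ∈ cycMod d (I j) (j+1) := by
        change d j (x i ^ c • v - x j • u) ∈ I j • (⊤ : Submodule R (L j))
        have : d j (x i ^ c • v - x j • u) = x j • b' + x i ^ c • b := by
          rw [map_sub, map_smul, map_smul, h, smul_add, smul_comm _ (x j), ← h', smul_add]; abel
        rw [this]
        exact add_mem (Submodule.smul_mem _ _ hb') (Submodule.smul_mem _ _ hb)
      obtain ⟨y, b2, hb2, h3⟩ := mem_bdMod.1
        (cyc_vanish d hex x I hI0 hI m hreg j (by omega) j le_rfl h2)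
      refine mem_bdMod.2 ⟨y, x j • u + b2, ?_, ?_⟩
      · rw [hI, mem_step]; exact ⟨u, b2, hb2, rfl⟩
      · rw [add_left_comm, h3]; abel

end Koszul

section Shift

variable {R : Type} [CommRing R]

/-- One step of dimension shifting. -/
theorem shift_step {A F B P₀ P₁ P₂ Q : Type}
    [AddCommGroup A] [Module R A] [AddCommGroup F] [Module R F] [AddCommGroup B] [Module R B]
    [AddCommGroup P₀] [Module R P₀] [AddCommGroup P₁] [Module R P₁]
    [AddCommGroup P₂] [Module R P₂] [AddCommGroup Q] [Module R Q]
    [Module.Flat R F] [Module.Flat R P₀]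
    (f : A →ₗ[R] F) (g : F →ₗ[R] B) (hf : Function.Injective f) (hg : Function.Surjective g)
    (hfg : Function.Exact f g)
    (p₂ : P₂ →ₗ[R] P₁) (p₁ : P₁ →ₗ[R] P₀) (q : P₀ →ₗ[R] Q)
    (hp : ∀ y, p₁ (p₂ y) = 0)
    (hpq : Function.Exact p₁ q)
    (hB : Function.Exact (p₂.lTensor B) (p₁.lTensor B))
    (z : A ⊗[R] P₀) (hz : f.rTensor Q (q.lTensor A z) = 0) :
    ∃ u, p₁.lTensor A u = z := by
  have hz1 : q.lTensor F (f.rTensor P₀ z) = 0 := by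
    rw [← hz]
    simp only [← LinearMap.comp_apply, LinearMap.lTensor_comp_rTensor,
      LinearMap.rTensor_comp_lTensor]
  obtain ⟨y, hy⟩ := (Module.Flat.lTensor_exact F hpq _).1 hz1
  have hy1 : p₁.lTensor B (g.rTensor P₁ y) = 0 := by
    have : p₁.lTensor B (g.rTensor P₁ y) = g.rTensor P₀ (p₁.lTensor F y) := by
      simp only [← LinearMap.comp_apply, LinearMap.lTensor_comp_rTensor,
        LinearMap.rTensor_comp_lTensor]
    rw [this, hy]
    exact (rTensor_exact P₀ hfg hg).apply_apply_eq_zero z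
  obtain ⟨w', hw'⟩ := (hB _).1 hy1
  obtain ⟨w, rfl⟩ := LinearMap.rTensor_surjective P₂ hg w'
  have h2 : g.rTensor P₁ (y - p₂.lTensor F w) = 0 := by
    rw [map_sub, ← hw', sub_eq_zero]
    simp only [← LinearMap.comp_apply, LinearMap.lTensor_comp_rTensor,
        LinearMap.rTensor_comp_lTensor]
  obtain ⟨u, hu⟩ := (rTensor_exact P₁ hfg hg _).1 h2
  refine ⟨u, Module.Flat.rTensor_preserves_injective_linearMap (M := P₀) f hf ?_⟩
  have : f.rTensor P₀ (p₁.lTensor A u) = p₁.lTensor F (f.rTensor P₁ u) := by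
    simp only [← LinearMap.comp_apply, LinearMap.lTensor_comp_rTensor,
        LinearMap.rTensor_comp_lTensor]
  rw [this, hu, map_sub, hy, sub_eq_self, ← LinearMap.comp_apply, ← LinearMap.lTensor_comp]
  have h0 : p₁ ∘ₗ p₂ = 0 := LinearMap.ext hp
  simp [h0]

end Shift

section Coordinates

theorem basis_mem_smul_top {R F ι : Type} [CommRing R] [AddCommGroup F] [Module R F]
    (b : Module.Basis ι R F) (J : Ideal R) (z : F) :
    z ∈ J • (⊤ : Submodule R F) ↔ ∀ i, b.repr z i ∈ J := by
  constructor
  · intro hz i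
    have := Submodule.smul_top_le_comap_smul_top J (b.coord i) hz
    simpa using this
  · intro h
    rw [← b.linearCombination_repr z, Finsupp.linearCombination_apply]
    exact Submodule.sum_mem _ fun i _ => Submodule.smul_mem_smul (h i) trivial

theorem smul_top_ne_top {R F : Type} [CommRing R] [AddCommGroup F] [Module R F]
    [Module.Free R F] [Nontrivial F] {J : Ideal R} (hJ : J ≠ ⊤) :
    J • (⊤ : Submodule R F) ≠ ⊤ := by
  intro h
  have : Nontrivial R := Module.nontrivial R F
  let b := Module.Free.chooseBasis R F
  have : Nonempty (Module.Free.ChooseBasisIndex R F) := b.index_nonempty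
  obtain ⟨i⟩ := this
  have h1 : b i ∈ J • (⊤ : Submodule R F) := by rw [h]; trivial
  have := (basis_mem_smul_top b J _).1 h1 i
  simp only [Module.Basis.repr_self, Finsupp.single_eq_same] at this
  exact hJ ((Ideal.eq_top_iff_one _).2 this)

/-- the ideal generated by the first `j` variables -/
def firstVars (K : Type) [Field K] (n : ℕ) (j : ℕ) : Ideal (PolyS K n) :=
  Ideal.span (MvPolynomial.X '' {i : Fin (n+1) | i.val < j})

/-- the variables indexed by natural numbers -/
def natVar (K : Type) [Field K] (n : ℕ) (j : ℕ) : PolyS K n :=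
  if h : j < n + 1 then MvPolynomial.X ⟨j, h⟩ else 0

theorem firstVars_zero (K : Type) [Field K] (n : ℕ) : firstVars K n 0 = ⊥ := by
  simp [firstVars]

theorem firstVars_top (K : Type) [Field K] (n : ℕ) : firstVars K n (n+1) = irrel K n := by
  have : {i : Fin (n+1) | i.val < n + 1} = Set.univ := by ext i; simp only [Set.mem_ofPred_eq, Set.mem_univ, iff_true]; exact i.2
  rw [firstVars, irrel, this, Set.image_univ]

theorem firstVars_succ (K : Type) [Field K] (n : ℕ) (j : ℕ) :
    firstVars K n (j+1) = firstVars K n j ⊔ Ideal.span {natVar K n j} := by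
  unfold natVar
  split_ifs with h
  · rw [firstVars, firstVars, ← Ideal.span_union]
    congr 1
    rw [← Set.image_singleton (f := MvPolynomial.X), ← Set.image_union]
    congr 1
    ext i
    simp [Fin.ext_iff]
    omega
  · have : {i : Fin (n+1) | i.val < j + 1} = {i : Fin (n+1) | i.val < j} := by
      ext i; simp; omega
    rw [firstVars, this]; simp [firstVars]

theorem natVar_reg (K : Type) [Field K] (n : ℕ) (j : ℕ) (hj : j < n + 1) (a : PolyS K n)
    (ha : natVar K n j * a ∈ firstVars K n j) : a ∈ firstVars K n j := by
  rw [natVar, dif_pos hj] at ha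
  rw [firstVars, MvPolynomial.mem_ideal_span_X_image] at ha ⊢
  intro m hm
  obtain ⟨i, hi, h⟩ := ha (Finsupp.single ⟨j, hj⟩ 1 + m) (by
    rw [MvPolynomial.mem_support_iff, MvPolynomial.coeff_X_mul]
    exact MvPolynomial.mem_support_iff.1 hm)
  refine ⟨i, hi, ?_⟩
  have hi' : i.val < j := hi
  have : (⟨j, hj⟩ : Fin (n+1)) ≠ i := by
    intro h; rw [← h] at hi'; simp at hi'
  simpa [Finsupp.single_apply, this] using h

theorem natVar_reg_free (K : Type) [Field K] (n : ℕ) (j : ℕ) (hj : j < n + 1)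
    (F : Type) [AddCommGroup F] [Module (PolyS K n) F] [Module.Free (PolyS K n) F] (w : F)
    (hw : natVar K n j • w ∈ firstVars K n j • (⊤ : Submodule (PolyS K n) F)) :
    w ∈ firstVars K n j • (⊤ : Submodule (PolyS K n) F) := by
  let b := Module.Free.chooseBasis (PolyS K n) F
  rw [basis_mem_smul_top b] at hw ⊢
  intro i
  refine natVar_reg K n j hj _ ?_
  simpa using hw i

theorem natVar_mem (K : Type) [Field K] (n : ℕ) (j : ℕ) : natVar K n j ∈ irrel K n := by
  unfold natVar
  split_ifs with h
  · exact Ideal.subset_span ⟨_, rfl⟩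
  · exact zero_mem _

theorem irrel_ne_top (K : Type) [Field K] (n : ℕ) : irrel K n ≠ ⊤ := by
  rw [Ideal.ne_top_iff_one, ← firstVars_top, firstVars, MvPolynomial.mem_ideal_span_X_image]
  intro h
  obtain ⟨i, -, h⟩ := h 0 (by simp)
  simp at h

end Coordinates

section Res

variable {K n}
variable {N : Type} [AddCommGroup N] [Module (PolyS K n) N]

theorem res_nontrivial (hN : Nontrivial N) (hNfl : IsGradedFiniteLength K n N)
    (res : MinimalResolution K n N) : Nontrivial (res.L (n+1)) := by
  have := res.free
  obtain ⟨-, c, hc⟩ := hNfl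
  obtain ⟨⟨z, -, hz⟩, -⟩ := cyc_nonvanish res.d res.exact (natVar K n) (firstVars K n)
    (firstVars_zero K n) (firstVars_succ K n) (n+1)
    (fun j hj i w hw => natVar_reg_free K n j hj _ w hw) c (by
      intro i _ z
      rw [res.exact0, LinearMap.mem_ker, map_smul]
      exact Module.mem_annihilator.1 (hc (Ideal.pow_mem_pow (natVar_mem K n i) c)) _) (by
      rw [res.exact0]
      intro h
      obtain ⟨y, hy⟩ := exists_ne (0 : N)
      obtain ⟨x, rfl⟩ := res.aug_surjective y
      exact hy (LinearMap.mem_ker.1 (h ▸ trivial))) (n+1) le_rfl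
  exact ⟨z, 0, fun h => hz (h ▸ zero_mem _)⟩

theorem res_subsingleton (res : MinimalResolution K n N) : Subsingleton (res.L (n+2)) := by
  have := res.free
  have h := cyc_vanish res.d res.exact (natVar K n) (firstVars K n)
    (firstVars_zero K n) (firstVars_succ K n) (n+1)
    (fun j hj i w hw => natVar_reg_free K n j hj _ w hw) (n+1) le_rfl (n+1) le_rfl
  rw [firstVars_top] at h
  by_contra hs
  rw [not_subsingleton_iff_nontrivial] at hs
  refine smul_top_ne_top (F := res.L (n+2)) (irrel_ne_top K n) (eq_top_iff.2 ?_)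
  intro z _
  have hz : z ∈ cycMod res.d (irrel K n) (n+2) := res.minimal (n+1) ⟨z, rfl⟩
  have := h hz
  rwa [bdMod, sup_eq_right.2 (res.minimal (n+2))] at this

theorem res_injective (res : MinimalResolution K n N) : Function.Injective (res.d n) := by
  have := res_subsingleton res
  rw [← LinearMap.ker_eq_bot, ← res.exact, LinearMap.range_eq_bot]
  exact LinearMap.ext fun z => by rw [Subsingleton.elim z 0]; simp

theorem exists_socle {M : Type} [AddCommGroup M] [Module (PolyS K n) M]
    (hM : Nontrivial M) (hMfl : IsGradedFiniteLength K n M) :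
    ∃ s : M, s ≠ 0 ∧ ∀ r ∈ irrel K n, r • s = 0 := by
  classical
  obtain ⟨-, hc⟩ := hMfl
  obtain ⟨e, he⟩ : ∃ e, Nat.find hc = e + 1 := by
    refine Nat.exists_eq_succ_of_ne_zero fun h0 => ?_
    have := Nat.find_spec hc
    rw [h0, pow_zero, Ideal.one_eq_top] at this
    obtain ⟨y, hy⟩ := exists_ne (0 : M)
    exact hy (by simpa using Module.mem_annihilator.1 (this (x := 1) trivial) y)
  have h1 := Nat.find_min hc (m := e) (by omega)
  have h2 := Nat.find_spec hc
  rw [he, pow_succ'] at h2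
  obtain ⟨a, ha, ha'⟩ := SetLike.not_le_iff_exists.1 h1
  rw [Module.mem_annihilator] at ha'
  push Not at ha'
  obtain ⟨y, hy⟩ := ha'
  refine ⟨a • y, hy, fun r hr => ?_⟩
  rw [← mul_smul]
  exact Module.mem_annihilator.1 (h2 (Ideal.mul_mem_mul hr ha)) y

theorem not_inj_rTensor {F G M : Type} [AddCommGroup F] [Module (PolyS K n) F]
    [AddCommGroup G] [Module (PolyS K n) G] [Module.Free (PolyS K n) F] [Nontrivial F]
    [AddCommGroup M] [Module (PolyS K n) M] (f : F →ₗ[PolyS K n] G)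
    (hf : LinearMap.range f ≤ irrel K n • (⊤ : Submodule (PolyS K n) G))
    (hM : Nontrivial M) (hMfl : IsGradedFiniteLength K n M) :
    ¬ Function.Injective (f.rTensor M) := by
  intro hinj
  obtain ⟨s, hs, hs'⟩ := exists_socle hM hMfl
  let b := Module.Free.chooseBasis (PolyS K n) F
  obtain ⟨i⟩ : Nonempty (Module.Free.ChooseBasisIndex (PolyS K n) F) := b.index_nonempty
  have h1 : ∀ g ∈ irrel K n • (⊤ : Submodule (PolyS K n) G), g ⊗ₜ[PolyS K n] s = 0 := by
    intro g hg
    induction hg using Submodule.smul_induction_on' with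
    | smul r hr g _ => rw [TensorProduct.smul_tmul, hs' r hr, TensorProduct.tmul_zero]
    | add x _ y _ hx hy => rw [TensorProduct.add_tmul, hx, hy, add_zero]
  have h2 : b i ⊗ₜ[PolyS K n] s = 0 := hinj (by
    rw [LinearMap.rTensor_tmul, map_zero]
    exact h1 _ (hf ⟨_, rfl⟩))
  have h3 := congrArg (TensorProduct.lid (PolyS K n) M) (congrArg ((b.coord i).rTensor M) h2)
  rw [LinearMap.rTensor_tmul, TensorProduct.lid_tmul] at h3
  simp at h3
  exact hs h3

end Res

section Balance

variable {R : Type} [CommRing R] {L : ℕ → Type} [∀ i, AddCommGroup (L i)] [∀ i, Module R (L i)]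
  {P : ℕ → Type} [∀ i, AddCommGroup (P i)] [∀ i, Module R (P i)]

theorem shift_all [∀ i, Module.Flat R (L i)] [∀ i, Module.Flat R (P i)]
    (d : ∀ i : ℕ, L (i+1) →ₗ[R] L i) (hex : ∀ i, Function.Exact (d (i+1)) (d i))
    (p : ∀ i : ℕ, P (i+1) →ₗ[R] P i) (hp : ∀ i, Function.Exact (p (i+1)) (p i))
    {N : Type} [AddCommGroup N] [Module R N] (aug : L 0 →ₗ[R] N)
    (haug : Function.Surjective aug) (hex0 : Function.Exact (d 0) aug) (n : ℕ)
    (hT : Function.Exact ((p (n+1)).lTensor N) ((p n).lTensor N)) (j : ℕ) :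
    ∀ k, k + j = n → ∃ (B : Type) (_ : AddCommGroup B) (_ : Module R B) (g : L j →ₗ[R] B),
      Function.Surjective g ∧ Function.Exact (d j) g ∧
      Function.Exact ((p (k+1)).lTensor B) ((p k).lTensor B) := by
  induction j with
  | zero =>
    rintro k rfl
    exact ⟨N, inferInstance, inferInstance, aug, haug, hex0, hT⟩
  | succ j ih =>
    intro k hk
    obtain ⟨B, _, _, g, hg, hdg, hB⟩ := ih (k+1) (by omega)
    refine ⟨LinearMap.range (d j), inferInstance, inferInstance, (d j).rangeRestrict,
      LinearMap.surjective_rangeRestrict _, ?_, ?_⟩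
    · intro z
      rw [← hex j z, ← Submodule.coe_eq_zero]; rfl
    · intro z
      constructor
      · intro hz
        refine shift_step (LinearMap.range (d j)).subtype g (Submodule.subtype_injective _) hg ?_
          (p (k+2)) (p (k+1)) (p k) (fun y => (hp (k+1)).apply_apply_eq_zero y) (hp k) hB z ?_
        · intro y
          rw [hdg y]
          simp
        · rw [hz, map_zero]
      · rintro ⟨u, rfl⟩
        rw [← LinearMap.comp_apply, ← LinearMap.lTensor_comp, (hp k).linearMap_comp_eq_zero]
        simp

theorem tor_inj [∀ i, Module.Flat R (L i)] [∀ i, Module.Flat R (P i)]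
    (d : ∀ i : ℕ, L (i+1) →ₗ[R] L i) (hex : ∀ i, Function.Exact (d (i+1)) (d i))
    (p : ∀ i : ℕ, P (i+1) →ₗ[R] P i) (hp : ∀ i, Function.Exact (p (i+1)) (p i))
    {N M : Type} [AddCommGroup N] [Module R N] [AddCommGroup M] [Module R M] (aug : L 0 →ₗ[R] N)
    (haug : Function.Surjective aug) (hex0 : Function.Exact (d 0) aug)
    (q : P 0 →ₗ[R] M) (hq : Function.Surjective q) (hpq : Function.Exact (p 0) q) (n : ℕ)
    (hT : Function.Exact ((p (n+1)).lTensor N) ((p n).lTensor N))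
    (hd : Function.Injective (d n)) : Function.Injective ((d n).rTensor M) := by
  obtain ⟨B, _, _, g, hg, hdg, hB⟩ := shift_all d hex p hp aug haug hex0 n hT n 0 (by omega)
  rw [injective_iff_map_eq_zero]
  intro z hz
  obtain ⟨z, rfl⟩ := LinearMap.lTensor_surjective (L (n+1)) hq z
  obtain ⟨u, rfl⟩ := shift_step (d n) g hd hg hdg (p 1) (p 0) q
    (fun y => (hp 0).apply_apply_eq_zero y) hpq hB z hz
  rw [← LinearMap.comp_apply, ← LinearMap.lTensor_comp, hpq.linearMap_comp_eq_zero]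
  simp

theorem exact_of_tor_subsingleton (N M : Type) [AddCommGroup N] [Module R N]
    [AddCommGroup M] [Module R M] (P : ProjectiveResolution (ModuleCat.of R M)) (n : ℕ)
    (h : Subsingleton (((Tor (ModuleCat R) (n+1)).obj
      (ModuleCat.of R N)).obj (ModuleCat.of R M))) :
    Function.Exact ((P.complex.d (n+2) (n+1)).hom.lTensor N)
      ((P.complex.d (n+1) n).hom.lTensor N) := by
  let F := (MonoidalCategory.tensoringLeft (ModuleCat R)).obj (ModuleCat.of R N)
  have hz : Limits.IsZero ((F.leftDerived (n+1)).obj (ModuleCat.of R M)) :=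
    @ModuleCat.isZero_of_subsingleton _ _ _ h
  have hz2 := hz.of_iso (P.isoLeftDerivedObj F (n+1)).symm
  have hz3 : ((F.mapHomologicalComplex _).obj P.complex).ExactAt (n+1) := by
    rw [HomologicalComplex.exactAt_iff_isZero_homology]
    exact hz2
  rw [HomologicalComplex.exactAt_iff' _ (n+2) (n+1) n (by simp) (by simp)] at hz3
  exact (ShortComplex.ShortExact.moduleCat_exact_iff_function_exact _).1 hz3

theorem tor_inj' [∀ i, Module.Flat R (L i)]
    (d : ∀ i : ℕ, L (i+1) →ₗ[R] L i) (hex : ∀ i, Function.Exact (d (i+1)) (d i))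
    {N M : Type} [AddCommGroup N] [Module R N] [AddCommGroup M] [Module R M] (aug : L 0 →ₗ[R] N)
    (haug : Function.Surjective aug) (hex0 : Function.Exact (d 0) aug) (n : ℕ)
    (hT : Subsingleton (((Tor (ModuleCat R) (n+1)).obj
      (ModuleCat.of R N)).obj (ModuleCat.of R M)))
    (hd : Function.Injective (d n)) : Function.Injective ((d n).rTensor M) := by
  let P := projectiveResolution (ModuleCat.of R M)
  have hproj : ∀ i, Module.Projective R (P.complex.X i) := fun i =>
    (IsProjective.iff_projective _).2 (P.projective i)
  have hflat : ∀ i, Module.Flat R (P.complex.X i) := fun i => inferInstance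
  have hepi : Epi (P.π.f 0) := inferInstance
  have h0 : (ShortComplex.mk _ _ P.complex_d_comp_π_f_zero).Exact :=
    ShortComplex.exact_of_g_is_cokernel _ P.isColimitCokernelCofork
  exact tor_inj (P := fun i => P.complex.X i) d hex (fun i => (P.complex.d (i+1) i).hom)
    (fun i => (ShortComplex.ShortExact.moduleCat_exact_iff_function_exact _).1 (P.exact_succ i))
    aug haug hex0 (P.π.f 0).hom ((ModuleCat.epi_iff_surjective _).1 hepi)
    ((ShortComplex.ShortExact.moduleCat_exact_iff_function_exact _).1 h0) n
    (exact_of_tor_subsingleton N M P n hT) hd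

end Balance

/-- For nonzero finite length graded modules `N, M` over
`S = K[X₀,…,Xₙ]` and a minimal free resolution `0 → L_{n+1} → ⋯ → L₀ → N → 0`,
the map `L_{n+1} ⊗ M → L_n ⊗ M` is not injective; equivalently
`Tor_{n+1}^S(N,M) ≠ 0`. -/
theorem top_tor_nonvanishing
    (K : Type) [Field K] (n : ℕ)
    (N M : Type) [AddCommGroup N] [Module (PolyS K n) N]
    [AddCommGroup M] [Module (PolyS K n) M]
    (hN : Nontrivial N) (hM : Nontrivial M)
    (hNfl : IsGradedFiniteLength K n N) (hMfl : IsGradedFiniteLength K n M)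
    (res : MinimalResolution K n N) :
    ¬ Function.Injective (LinearMap.rTensor M (res.d n)) ∧
    Nontrivial (((Tor (ModuleCat (PolyS K n)) (n+1)).obj
      (ModuleCat.of (PolyS K n) N)).obj (ModuleCat.of (PolyS K n) M)) := by
  have := res.free
  have := res_nontrivial hN hNfl res
  have h1 : ¬ Function.Injective (LinearMap.rTensor M (res.d n)) :=
    not_inj_rTensor (res.d n) (res.minimal n) hM hMfl
  refine ⟨h1, ?_⟩
  rw [← not_subsingleton_iff_nontrivial]
  intro hT
  exact h1 (tor_inj' res.d (fun i => LinearMap.exact_iff.2 (res.exact i).symm) res.aug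
    res.aug_surjective (LinearMap.exact_iff.2 res.exact0.symm) n hT (res_injective res))
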